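/- For every L_⊳-formula φ: φ ∈ ICK ⊕ (p ⊳ p) if and only if φ is valid on every conditional Kripke frame (X, ≤, 𝓡) satisfying R_a[x] ⊆ a for all worlds x ∈ X and all upsets a. -/

import Mathlib

/-! ## The conditional language `L_⊳` -/

/-- Formulas of the conditional language `L_⊳`, with proposition letters
indexed by the countable set `ℕ`. -/
inductive CForm : Type where
  | var : ℕ → CForm
  | bot : CForm
  | and : CForm → CForm → CForm
  | or : CForm → CForm → CForm
  | imp : CForm → CForm → CForm
  | cond : CForm → CForm → CForm

/-- `⊤ := ⊥ → ⊥`. -/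
def cTop : CForm := CForm.imp CForm.bot CForm.bot

/-- `φ ↔ ψ := (φ → ψ) ∧ (ψ → φ)`. -/
def cIff (φ ψ : CForm) : CForm := CForm.and (CForm.imp φ ψ) (CForm.imp ψ φ)

/-- Uniform substitution of formulas for proposition letters. -/
def psubst (σ : ℕ → CForm) : CForm → CForm
  | CForm.var q => σ q
  | CForm.bot => CForm.bot
  | CForm.and φ ψ => CForm.and (psubst σ φ) (psubst σ ψ)
  | CForm.or φ ψ => CForm.or (psubst σ φ) (psubst σ ψ)
  | CForm.imp φ ψ => CForm.imp (psubst σ φ) (psubst σ ψ)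
  | CForm.cond φ ψ => CForm.cond (psubst σ φ) (psubst σ ψ)

/-- The logic `ICK ⊕ Γ`: the smallest set of `L_⊳`-formulas containing an
axiomatisation of intuitionistic propositional logic, the formulas of `Γ`, the
axioms `(k_c)` and `(n_c)`, closed under uniform substitution, modus ponens and
the two congruence rules. -/
inductive ICK (Γ : Set CForm) : CForm → Prop where
  | prem {φ : CForm} : φ ∈ Γ → ICK Γ φ
  | a1 : ICK Γ (CForm.imp (CForm.and (CForm.var 0) (CForm.var 1)) (CForm.var 0))
  | a2 : ICK Γ (CForm.imp (CForm.and (CForm.var 0) (CForm.var 1)) (CForm.var 1))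
  | a3 : ICK Γ (CForm.imp (CForm.imp (CForm.var 0) (CForm.var 1))
      (CForm.imp (CForm.imp (CForm.var 0) (CForm.var 2))
        (CForm.imp (CForm.var 0) (CForm.and (CForm.var 1) (CForm.var 2)))))
  | a4 : ICK Γ (CForm.imp (CForm.var 0) (CForm.or (CForm.var 0) (CForm.var 1)))
  | a5 : ICK Γ (CForm.imp (CForm.var 1) (CForm.or (CForm.var 0) (CForm.var 1)))
  | a6 : ICK Γ (CForm.imp (CForm.imp (CForm.var 0) (CForm.var 2))
      (CForm.imp (CForm.imp (CForm.var 1) (CForm.var 2))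
        (CForm.imp (CForm.or (CForm.var 0) (CForm.var 1)) (CForm.var 2))))
  | a7 : ICK Γ (CForm.imp CForm.bot (CForm.var 0))
  | a8 : ICK Γ (CForm.imp (CForm.var 0) (CForm.imp (CForm.var 1) (CForm.var 0)))
  | a9 : ICK Γ (CForm.imp
      (CForm.imp (CForm.var 0) (CForm.imp (CForm.var 1) (CForm.var 2)))
      (CForm.imp (CForm.imp (CForm.var 0) (CForm.var 1))
        (CForm.imp (CForm.var 0) (CForm.var 2))))
  | kc : ICK Γ (cIff (CForm.cond (CForm.var 0) (CForm.and (CForm.var 1) (CForm.var 2)))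
      (CForm.and (CForm.cond (CForm.var 0) (CForm.var 1))
        (CForm.cond (CForm.var 0) (CForm.var 2))))
  | nc : ICK Γ (cIff (CForm.cond (CForm.var 0) cTop) cTop)
  | subst {φ : CForm} (σ : ℕ → CForm) : ICK Γ φ → ICK Γ (psubst σ φ)
  | mp {φ ψ : CForm} : ICK Γ (CForm.imp φ ψ) → ICK Γ φ → ICK Γ ψ
  | congL {φ ψ χ : CForm} :
      ICK Γ (cIff φ ψ) → ICK Γ (cIff (CForm.cond φ χ) (CForm.cond ψ χ))
  | congR {φ ψ χ : CForm} :
      ICK Γ (cIff φ ψ) → ICK Γ (cIff (CForm.cond χ φ) (CForm.cond χ ψ))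

/-! ## Conditional Kripke frames and semantics -/

/-- `a` is an upset (upward closed set) w.r.t. the relation `le`. -/
def IsUpset {X : Type} (le : X → X → Prop) (a : Set X) : Prop :=
  ∀ ⦃x y : X⦄, le x y → x ∈ a → y ∈ a

/-- The upward closure `↑s` of a set `s` w.r.t. the relation `le`. -/
def upCl {X : Type} (le : X → X → Prop) (s : Set X) : Set X :=
  {z | ∃ y ∈ s, le y z}

/-- Truth sets of `L_⊳`-formulas, by intuitionistic Kripke semantics for the
propositional connectives, where `x ⊨ φ ⊳ ψ` iff every `y` with
`x R_{V(φ)} y` satisfies `ψ` (here `V(φ)` is the truth set of `φ`). -/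
def csat {X : Type} (le : X → X → Prop) (R : Set X → X → X → Prop)
    (V : ℕ → Set X) : CForm → Set X
  | CForm.var p => V p
  | CForm.bot => ∅
  | CForm.and φ ψ => csat le R V φ ∩ csat le R V ψ
  | CForm.or φ ψ => csat le R V φ ∪ csat le R V ψ
  | CForm.imp φ ψ => {x | ∀ y, le x y → y ∈ csat le R V φ → y ∈ csat le R V ψ}
  | CForm.cond φ ψ => {x | ∀ y, R (csat le R V φ) x y → y ∈ csat le R V ψ}

/-- A conditional Kripke frame: a nonempty preordered set `(X, le)` with a
family of relations `R a` (indexed by the upsets `a`) satisfying the coherence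
condition `(≤ ∘ R_a) ⊆ (R_a ∘ ≤)`. -/
structure CondFrame where
  X : Type
  ne : Nonempty X
  le : X → X → Prop
  le_refl : ∀ x, le x x
  le_trans : ∀ ⦃x y z⦄, le x y → le y z → le x z
  R : Set X → X → X → Prop
  coh : ∀ a : Set X, IsUpset le a →
    ∀ ⦃x y z⦄, le x y → R a y z → ∃ w, R a x w ∧ le w z

/-- Validity on a conditional Kripke frame: truth at every world under every
valuation of the proposition letters by upsets. -/
def CondFrame.valid (F : CondFrame) (φ : CForm) : Prop :=
  ∀ V : ℕ → Set F.X, (∀ p, IsUpset F.le (V p)) → ∀ x, x ∈ csat F.le F.R V φ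

/-! ## Conditional Heyting algebras -/

/-- A conditional Heyting algebra: a Heyting algebra with a binary operation
`cond` (written `⊳` in the paper) preserving finite meets in its second
argument. -/
class CondHeyting (A : Type) extends HeytingAlgebra A where
  cond : A → A → A
  cond_inf : ∀ a b c : A, cond a (b ⊓ c) = cond a b ⊓ cond a c
  cond_top : ∀ a : A, cond a ⊤ = ⊤

/-- Evaluation of an `L_⊳`-formula in a conditional Heyting algebra under an
assignment `σ` of the proposition letters. -/
def evalCHA {A : Type} [CondHeyting A] (σ : ℕ → A) : CForm → A
  | CForm.var p => σ p
  | CForm.bot => ⊥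
  | CForm.and φ ψ => evalCHA σ φ ⊓ evalCHA σ ψ
  | CForm.or φ ψ => evalCHA σ φ ⊔ evalCHA σ ψ
  | CForm.imp φ ψ => evalCHA σ φ ⇨ evalCHA σ ψ
  | CForm.cond φ ψ => CondHeyting.cond (evalCHA σ φ) (evalCHA σ ψ)

/-- A formula is satisfied in a conditional Heyting algebra if it evaluates to
`⊤` under every assignment. -/
def chaSat (A : Type) [CondHeyting A] (φ : CForm) : Prop :=
  ∀ σ : ℕ → A, evalCHA σ φ = ⊤

/-- A prime filter: a proper, nonempty, upward closed subset, closed under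
binary meets, such that `a ⊔ b ∈ x` implies `a ∈ x` or `b ∈ x`. -/
def IsPrimeFilter {A : Type} [Lattice A] (x : Set A) : Prop :=
  x.Nonempty ∧ x ≠ Set.univ ∧
  (∀ ⦃a b : A⦄, a ∈ x → a ≤ b → b ∈ x) ∧
  (∀ ⦃a b : A⦄, a ∈ x → b ∈ x → a ⊓ b ∈ x) ∧
  (∀ ⦃a b : A⦄, a ⊔ b ∈ x → a ∈ x ∨ b ∈ x)

/-! ## General conditional frames -/

/-- A general conditional frame `(X, ≤, 𝓡, A)`. -/
structure GenFrame where
  X : Type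
  le : X → X → Prop
  le_refl : ∀ x, le x x
  le_trans : ∀ ⦃x y z⦄, le x y → le y z → le x z
  le_antisymm : ∀ ⦃x y⦄, le x y → le y x → x = y
  A : Set (Set X)
  upA : ∀ a ∈ A, IsUpset le a
  univ_mem : Set.univ ∈ A
  empty_mem : ∅ ∈ A
  inter_mem : ∀ a ∈ A, ∀ b ∈ A, a ∩ b ∈ A
  union_mem : ∀ a ∈ A, ∀ b ∈ A, a ∪ b ∈ A
  R : Set X → X → X → Prop
  himp_mem : ∀ a ∈ A, ∀ b ∈ A, {x | ∀ y, le x y → y ∈ a → y ∈ b} ∈ A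
  cimp_mem : ∀ a ∈ A, ∀ b ∈ A, {x | ∀ y, R a x y → y ∈ b} ∈ A
  coh : ∀ a ∈ A, ∀ ⦃x y z⦄, le x y → R a y z → ∃ w, R a x w ∧ le w z

/-- The carrier of the complex algebra of a general frame: the admissible
upsets. -/
def GenFrame.AUp (G : GenFrame) : Type := {a : Set G.X // a ∈ G.A}

instance GenFrame.instLatticeAUp (G : GenFrame) : Lattice G.AUp where
  le a b := a.val ⊆ b.val
  le_refl a := subset_rfl
  le_trans a b c h h' := Set.Subset.trans h h'
  le_antisymm a b h h' := Subtype.ext (subset_antisymm h h')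
  sup a b := ⟨a.val ∪ b.val, G.union_mem _ a.2 _ b.2⟩
  le_sup_left a b := Set.subset_union_left
  le_sup_right a b := Set.subset_union_right
  sup_le a b c h h' := Set.union_subset h h'
  inf a b := ⟨a.val ∩ b.val, G.inter_mem _ a.2 _ b.2⟩
  inf_le_left a b := Set.inter_subset_left
  inf_le_right a b := Set.inter_subset_right
  le_inf a b c h h' := Set.subset_inter h h'

instance GenFrame.instHeytingAUp (G : GenFrame) : HeytingAlgebra G.AUp :=
  { GenFrame.instLatticeAUp G with
    top := ⟨Set.univ, G.univ_mem⟩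
    le_top := fun a => Set.subset_univ _
    bot := ⟨∅, G.empty_mem⟩
    bot_le := fun a => Set.empty_subset _
    himp := fun a b => ⟨{x | ∀ y, G.le x y → y ∈ a.val → y ∈ b.val},
      G.himp_mem _ a.2 _ b.2⟩
    compl := fun a => ⟨{x | ∀ y, G.le x y → y ∈ a.val → y ∈ (∅ : Set G.X)},
      G.himp_mem _ a.2 _ G.empty_mem⟩
    le_himp_iff := by
      intro a b c
      show a.val ⊆ {x | ∀ y, G.le x y → y ∈ b.val → y ∈ c.val} ↔
        a.val ∩ b.val ⊆ c.val
      constructor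
      · rintro h x ⟨hxa, hxb⟩
        exact h hxa x (G.le_refl x) hxb
      · intro h x hxa y hle hyb
        exact h ⟨G.upA a.val a.2 hle hxa, hyb⟩
    himp_bot := fun a => rfl }

/-- The complex algebra `AUp(G)` of a general frame `G` is a conditional
Heyting algebra, with `a ⊳ b := {x | R_a[x] ⊆ b}`. -/
instance GenFrame.instCondHeytingAUp (G : GenFrame) : CondHeyting G.AUp where
  cond a b := ⟨{x | ∀ y, G.R a.val x y → y ∈ b.val}, G.cimp_mem _ a.2 _ b.2⟩
  cond_inf a b c := Subtype.ext (Set.ext fun x => by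
    show (∀ y, G.R a.val x y → y ∈ b.val ∩ c.val) ↔
      (∀ y, G.R a.val x y → y ∈ b.val) ∧ (∀ y, G.R a.val x y → y ∈ c.val)
    constructor
    · intro h
      exact ⟨fun y hy => (h y hy).1, fun y hy => (h y hy).2⟩
    · rintro ⟨h1, h2⟩ y hy
      exact ⟨h1 y hy, h2 y hy⟩)
  cond_top a := Subtype.ext (Set.ext fun x => by
    show (∀ y, G.R a.val x y → y ∈ (Set.univ : Set G.X)) ↔
      x ∈ (Set.univ : Set G.X)
    exact ⟨fun _ => trivial, fun _ y _ => trivial⟩)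

/-! ## Conditional Esakia spaces -/

/-- A conditional Esakia space: an Esakia space `(X, le, top)` together with a
family of relations `R a` indexed by the clopen upsets `a`, such that
`{x | R_a[x] ⊆ b}` is clopen for clopen upsets `a, b`, each `R_a[x]` is
closed, and `(≤ ∘ R_a ∘ ≤) = R_a`. -/
structure CondEsakia where
  X : Type
  ne : Nonempty X
  le : X → X → Prop
  le_refl : ∀ x, le x x
  le_trans : ∀ ⦃x y z⦄, le x y → le y z → le x z
  le_antisymm : ∀ ⦃x y⦄, le x y → le y x → x = y
  top : TopologicalSpace X
  compact : @CompactSpace X top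
  sep : ∀ x y : X, ¬ le x y →
    ∃ a : Set X, @IsClopen X top a ∧ IsUpset le a ∧ x ∈ a ∧ y ∉ a
  down_clopen : ∀ a : Set X, @IsClopen X top a →
    @IsClopen X top {x | ∃ y ∈ a, le x y}
  R : Set X → X → X → Prop
  box_clopen : ∀ a b : Set X, @IsClopen X top a → IsUpset le a →
    @IsClopen X top b → IsUpset le b →
    @IsClopen X top {x | ∀ y, R a x y → y ∈ b}
  coh : ∀ a : Set X, @IsClopen X top a → IsUpset le a →
    ∀ x z : X, (∃ x' y', le x x' ∧ R a x' y' ∧ le y' z) ↔ R a x z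
  im_closed : ∀ a : Set X, @IsClopen X top a → IsUpset le a →
    ∀ x : X, @IsClosed X top {y | R a x y}

/-- `a` is a clopen upset of the conditional Esakia space `S`. -/
def CondEsakia.ClopUp (S : CondEsakia) (a : Set S.X) : Prop :=
  @IsClopen S.X S.top a ∧ IsUpset S.le a

/-- Validity on a conditional Esakia space: truth at every world under every
valuation of the proposition letters by clopen upsets. -/
def CondEsakia.valid (S : CondEsakia) (φ : CForm) : Prop :=
  ∀ V : ℕ → Set S.X, (∀ p, S.ClopUp (V p)) → ∀ x, x ∈ csat S.le S.R V φ

/-- The family of relations of the empty fill-in `κ_∅(S)`: it agrees with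
`S.R` on clopen upsets and is empty on all other sets. -/
def CondEsakia.emptyFill (S : CondEsakia) : Set S.X → S.X → S.X → Prop :=
  fun a x y => S.ClopUp a ∧ S.R a x y

/-- Validity on the empty fill-in `κ_∅(S)`, a conditional Kripke frame:
truth at every world under every valuation by (arbitrary) upsets. -/
def CondEsakia.emptyFillValid (S : CondEsakia) (φ : CForm) : Prop :=
  ∀ V : ℕ → Set S.X, (∀ p, IsUpset S.le (V p)) →
    ∀ x, x ∈ csat S.le S.emptyFill V φ

/-! ## The modal language `L_□` -/

/-- Formulas of the modal language `L_□`. -/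
inductive MForm : Type where
  | var : ℕ → MForm
  | bot : MForm
  | and : MForm → MForm → MForm
  | or : MForm → MForm → MForm
  | imp : MForm → MForm → MForm
  | box : MForm → MForm

/-- The translation `(−)^p : L_□ → L_⊳`: it fixes proposition letters, `⊥`,
`∧`, `∨`, `→`, and sends `□ψ` to `p ⊳ ψ^p`. -/
def MForm.transl (p : ℕ) : MForm → CForm
  | MForm.var q => CForm.var q
  | MForm.bot => CForm.bot
  | MForm.and φ ψ => CForm.and (φ.transl p) (ψ.transl p)
  | MForm.or φ ψ => CForm.or (φ.transl p) (ψ.transl p)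
  | MForm.imp φ ψ => CForm.imp (φ.transl p) (ψ.transl p)
  | MForm.box φ => CForm.cond (CForm.var p) (φ.transl p)

/-- The proposition letter `p` occurs (as a subformula) in a modal formula. -/
def MForm.occurs (p : ℕ) : MForm → Prop
  | MForm.var q => p = q
  | MForm.bot => False
  | MForm.and φ ψ => φ.occurs p ∨ ψ.occurs p
  | MForm.or φ ψ => φ.occurs p ∨ ψ.occurs p
  | MForm.imp φ ψ => φ.occurs p ∨ ψ.occurs p
  | MForm.box φ => φ.occurs p

/-- Truth sets of `L_□`-formulas in a modal model, by intuitionistic Kripke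
semantics with `x ⊨ □φ` iff every `y` with `x R y` satisfies `φ`. -/
def msat {X : Type} (le : X → X → Prop) (R : X → X → Prop)
    (V : ℕ → Set X) : MForm → Set X
  | MForm.var p => V p
  | MForm.bot => ∅
  | MForm.and φ ψ => msat le R V φ ∩ msat le R V ψ
  | MForm.or φ ψ => msat le R V φ ∪ msat le R V ψ
  | MForm.imp φ ψ => {x | ∀ y, le x y → y ∈ msat le R V φ → y ∈ msat le R V ψ}
  | MForm.box φ => {x | ∀ y, R x y → y ∈ msat le R V φ}

/-- A modal Esakia space: an Esakia space with a relation `R` such that each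
`R[x]` is closed and `R = (≤ ∘ R ∘ ≤)`. -/
structure ModalEsakia where
  X : Type
  ne : Nonempty X
  le : X → X → Prop
  le_refl : ∀ x, le x x
  le_trans : ∀ ⦃x y z⦄, le x y → le y z → le x z
  le_antisymm : ∀ ⦃x y⦄, le x y → le y x → x = y
  top : TopologicalSpace X
  compact : @CompactSpace X top
  sep : ∀ x y : X, ¬ le x y →
    ∃ a : Set X, @IsClopen X top a ∧ IsUpset le a ∧ x ∈ a ∧ y ∉ a
  down_clopen : ∀ a : Set X, @IsClopen X top a →
    @IsClopen X top {x | ∃ y ∈ a, le x y}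
  R : X → X → Prop
  im_closed : ∀ x : X, @IsClosed X top {y | R x y}
  coh : ∀ x z : X, (∃ x' y', le x x' ∧ R x' y' ∧ le y' z) ↔ R x z

/-- Validity on a modal Esakia space: truth everywhere under every valuation
by clopen upsets. -/
def ModalEsakia.valid (M : ModalEsakia) (φ : MForm) : Prop :=
  ∀ V : ℕ → Set M.X, (∀ p, @IsClopen M.X M.top (V p) ∧ IsUpset M.le (V p)) →
    ∀ x, x ∈ msat M.le M.R V φ

/-- Validity on the underlying modal frame `κ(M)` of a modal Esakia space:
truth everywhere under every valuation by arbitrary upsets. -/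
def ModalEsakia.frameValid (M : ModalEsakia) (φ : MForm) : Prop :=
  ∀ V : ℕ → Set M.X, (∀ p, IsUpset M.le (V p)) → ∀ x, x ∈ msat M.le M.R V φ

/-- An `L_□`-formula is d-persistent if its validity on a modal Esakia space
implies its validity on the underlying modal frame. -/
def DPersistent (φ : MForm) : Prop :=
  ∀ M : ModalEsakia, M.valid φ → M.frameValid φ

/-- The axiom `(id)  p ⊳ p`. -/
def axId : CForm := CForm.cond (CForm.var 0) (CForm.var 0)

/-!
Soundness is an induction on derivations. For completeness, take as worlds the prime theories of the
logic, ordered by inclusion, and let `x R_a y` hold when `a` is the set of prime theories containing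
some formula `φ`, and `y` contains every `ψ` with `φ ⊳ ψ ∈ x`. This does not depend on the choice of
`φ`: by the prime theory theorem, formulas lying in the same prime theories are provably equivalent,
so the congruence rule for antecedents applies. As `{ψ | φ ⊳ ψ ∈ x}` is again a theory, the prime
theory theorem also yields the truth lemma for `⊳`. Since `R_a` is empty for all other upsets `a`,
the condition `R_a[x] ⊆ a` on this frame only has to be checked for `a` the truth set of a formula
`φ`, where it says that `φ ⊳ φ ∈ x`.
-/

theorem csat_psubst {X : Type} (le : X → X → Prop) (R : Set X → X → X → Prop)
    (V : ℕ → Set X) (σ : ℕ → CForm) (φ : CForm) :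
    csat le R V (psubst σ φ) = csat le R (fun p => csat le R V (σ p)) φ := by
  induction φ with
  | var p => rfl
  | bot => rfl
  | and φ ψ ihφ ihψ => simp only [psubst, csat, ihφ, ihψ]
  | or φ ψ ihφ ihψ => simp only [psubst, csat, ihφ, ihψ]
  | imp φ ψ ihφ ihψ => simp only [psubst, csat, ihφ, ihψ]
  | cond φ ψ ihφ ihψ => simp only [psubst, csat, ihφ, ihψ]

namespace CondFrame

variable {F : CondFrame} {V : ℕ → Set F.X} {Γ : Set CForm} {φ ψ χ : CForm}

theorem isUpset_csat (hV : ∀ p, IsUpset F.le (V p)) (φ : CForm) :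
    IsUpset F.le (csat F.le F.R V φ) := by
  induction φ with
  | var p => exact hV p
  | bot => exact fun _ _ _ hx => hx
  | and φ ψ ihφ ihψ => exact fun _ _ hxy hx => ⟨ihφ hxy hx.1, ihψ hxy hx.2⟩
  | or φ ψ ihφ ihψ => exact fun _ _ hxy hx => hx.imp (ihφ hxy) (ihψ hxy)
  | imp φ ψ _ _ => exact fun _ _ hxy hx z hyz => hx z (F.le_trans hxy hyz)
  | cond φ ψ ihφ ihψ =>
    intro x y hxy hx z hyz
    obtain ⟨w, hxw, hwz⟩ := F.coh _ ihφ hxy hyz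
    exact ihψ hwz (hx w hxw)

theorem forall_mem_csat_imp_iff :
    (∀ x, x ∈ csat F.le F.R V (φ.imp ψ)) ↔ csat F.le F.R V φ ⊆ csat F.le F.R V ψ :=
  ⟨fun h x => h x x (F.le_refl x), fun h _ _ _ hy => h hy⟩

theorem valid_imp_iff :
    F.valid (φ.imp ψ) ↔ ∀ V : ℕ → Set F.X, (∀ p, IsUpset F.le (V p)) →
      csat F.le F.R V φ ⊆ csat F.le F.R V ψ :=
  forall₂_congr fun _ _ => forall_mem_csat_imp_iff

theorem valid_cIff_iff :
    F.valid (cIff φ ψ) ↔ ∀ V : ℕ → Set F.X, (∀ p, IsUpset F.le (V p)) →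
      csat F.le F.R V φ = csat F.le F.R V ψ :=
  forall₂_congr fun _ _ => forall_and.trans <|
    (and_congr forall_mem_csat_imp_iff forall_mem_csat_imp_iff).trans Set.Subset.antisymm_iff.symm

theorem valid.psubst (h : F.valid φ) (σ : ℕ → CForm) : F.valid (psubst σ φ) := by
  intro V hV x
  rw [csat_psubst]
  exact h _ (fun p => isUpset_csat hV (σ p)) x

theorem valid.mp (himp : F.valid (φ.imp ψ)) (h : F.valid φ) : F.valid ψ :=
  fun V hV x => valid_imp_iff.1 himp V hV (h V hV x)

theorem valid.cond_congr_left (h : F.valid (cIff φ ψ)) :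
    F.valid (cIff (φ.cond χ) (ψ.cond χ)) :=
  valid_cIff_iff.2 fun V hV => by simp only [csat, valid_cIff_iff.1 h V hV]

theorem valid.cond_congr_right (h : F.valid (cIff φ ψ)) :
    F.valid (cIff (χ.cond φ) (χ.cond ψ)) :=
  valid_cIff_iff.2 fun V hV => by simp only [csat, valid_cIff_iff.1 h V hV]

theorem valid_cond_and : F.valid (cIff (φ.cond (ψ.and χ)) ((φ.cond ψ).and (φ.cond χ))) :=
  valid_cIff_iff.2 fun _ _ => Set.ext fun _ => forall₂_and

theorem valid_cond_cTop : F.valid (cIff (φ.cond cTop) cTop) :=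
  valid_cIff_iff.2 fun _ _ => Set.ext fun _ => ⟨fun _ _ _ hy => hy, fun _ _ _ _ _ hz => hz⟩

theorem valid_axId_iff :
    F.valid axId ↔
      ∀ (x : F.X) (a : Set F.X), IsUpset F.le a → ∀ y, F.R a x y → y ∈ a :=
  ⟨fun h x a ha => h (fun _ => a) (fun _ => ha) x, fun h V hV x => h x (V 0) (hV 0)⟩

theorem valid_of_ick (hΓ : ∀ ψ ∈ Γ, F.valid ψ) (h : ICK Γ φ) : F.valid φ := by
  induction h with
  | prem h => exact hΓ _ h
  | a1 => exact valid_imp_iff.2 fun _ _ => Set.inter_subset_left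
  | a2 => exact valid_imp_iff.2 fun _ _ => Set.inter_subset_right
  | a3 =>
    exact valid_imp_iff.2 fun _ _ _ hpq _ hxy hpr z hyz hp =>
      ⟨hpq z (F.le_trans hxy hyz) hp, hpr z hyz hp⟩
  | a4 => exact valid_imp_iff.2 fun _ _ => Set.subset_union_left
  | a5 => exact valid_imp_iff.2 fun _ _ => Set.subset_union_right
  | a6 =>
    exact valid_imp_iff.2 fun _ _ _ hpr _ hxy hqr z hyz =>
      Or.rec (hpr z (F.le_trans hxy hyz)) (hqr z hyz)
  | a7 => exact valid_imp_iff.2 fun _ _ => Set.empty_subset _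
  | a8 => exact valid_imp_iff.2 fun _ hV _ hp _ hxy _ => hV 0 hxy hp
  | a9 =>
    exact valid_imp_iff.2 fun _ _ _ hpqr _ hxy hpq z hyz hp =>
      hpqr z (F.le_trans hxy hyz) hp z (F.le_refl z) (hpq z hyz hp)
  | kc => exact valid_cond_and
  | nc => exact valid_cond_cTop
  | subst σ _ ih => exact ih.psubst σ
  | mp _ _ ihimp ih => exact ihimp.mp ih
  | congL _ ih => exact ih.cond_congr_left
  | congR _ ih => exact ih.cond_congr_right

end CondFrame

/-- The substitution sending the letters `0`, `1` and all others to `α`, `β` and `γ`; it turns the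
axioms of `ICK`, stated for the letters `0`, `1`, `2`, into axiom schemes. -/
def tripleSubst (α β γ : CForm) : ℕ → CForm
  | 0 => α
  | 1 => β
  | _ => γ

namespace ICK

variable {Γ : Set CForm} (α β γ : CForm)

theorem and_imp_left : ICK Γ ((α.and β).imp α) :=
  subst (tripleSubst α β β) a1

theorem and_imp_right : ICK Γ ((α.and β).imp β) :=
  subst (tripleSubst α β β) a2

theorem imp_and_intro : ICK Γ ((α.imp β).imp ((α.imp γ).imp (α.imp (β.and γ)))) :=
  subst (tripleSubst α β γ) a3

theorem imp_or_left : ICK Γ (α.imp (α.or β)) :=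
  subst (tripleSubst α β β) a4

theorem imp_or_right : ICK Γ (β.imp (α.or β)) :=
  subst (tripleSubst α β β) a5

theorem or_imp_elim : ICK Γ ((α.imp γ).imp ((β.imp γ).imp ((α.or β).imp γ))) :=
  subst (tripleSubst α β γ) a6

theorem bot_imp : ICK Γ (CForm.bot.imp α) :=
  subst (tripleSubst α α α) a7

theorem imp_const : ICK Γ (α.imp (β.imp α)) :=
  subst (tripleSubst α β β) a8

theorem imp_distrib : ICK Γ ((α.imp (β.imp γ)).imp ((α.imp β).imp (α.imp γ))) :=
  subst (tripleSubst α β γ) a9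

theorem cond_and : ICK Γ (cIff (α.cond (β.and γ)) ((α.cond β).and (α.cond γ))) :=
  subst (tripleSubst α β γ) kc

theorem cond_cTop : ICK Γ (cIff (α.cond cTop) cTop) :=
  subst (tripleSubst α α α) nc

protected theorem imp_self : ICK Γ (α.imp α) :=
  ((imp_distrib α (α.imp α) α).mp (imp_const _ _)).mp (imp_const _ _)

end ICK

/-- A theory of the logic `ICK ⊕ Γ`: a set of formulas that contains the logic and is closed under
modus ponens, but not necessarily under substitution and the congruence rules. -/
structure IsTheory (Γ T : Set CForm) : Prop where
  mem_of_ick : ∀ ⦃φ⦄, ICK Γ φ → φ ∈ T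
  mp_mem : ∀ ⦃φ ψ⦄, φ.imp ψ ∈ T → φ ∈ T → ψ ∈ T

/-- The set `{β | α → β ∈ T}`. By the deduction theorem, it is the least theory containing `α` and
the theory `T`. -/
def adjoin (T : Set CForm) (α : CForm) : Set CForm :=
  {β | α.imp β ∈ T}

/-- The set `{β | α ⊳ β ∈ T}` of formulas that hold, according to `T`, under the condition `α`. -/
def consequents (T : Set CForm) (α : CForm) : Set CForm :=
  {β | α.cond β ∈ T}

section Theories

variable {Γ S T : Set CForm} {α β γ φ ψ : CForm}

theorem isTheory_setOf_ick : IsTheory Γ {φ | ICK Γ φ} where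
  mem_of_ick _ := id
  mp_mem _ _ := ICK.mp

namespace IsTheory

theorem mem_of_ick_imp (hT : IsTheory Γ T) (h : ICK Γ (α.imp β)) (hα : α ∈ T) : β ∈ T :=
  hT.mp_mem (hT.mem_of_ick h) hα

theorem imp_mem_of_mem (hT : IsTheory Γ T) (hβ : β ∈ T) : α.imp β ∈ T :=
  hT.mem_of_ick_imp (ICK.imp_const β α) hβ

theorem imp_and_mem (hT : IsTheory Γ T) (hφ : α.imp φ ∈ T) (hψ : α.imp ψ ∈ T) :
    α.imp (φ.and ψ) ∈ T :=
  hT.mp_mem (hT.mem_of_ick_imp (ICK.imp_and_intro α φ ψ) hφ) hψ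

theorem and_mem_iff (hT : IsTheory Γ T) : α.and β ∈ T ↔ α ∈ T ∧ β ∈ T :=
  ⟨fun h => ⟨hT.mem_of_ick_imp (ICK.and_imp_left α β) h,
      hT.mem_of_ick_imp (ICK.and_imp_right α β) h⟩,
    fun h => hT.mp_mem (hT.imp_and_mem (hT.imp_mem_of_mem h.1) (hT.imp_mem_of_mem h.2))
      (hT.mem_of_ick (ICK.imp_self CForm.bot))⟩

theorem mem_iff_of_ick_cIff (hT : IsTheory Γ T) (h : ICK Γ (cIff φ ψ)) : φ ∈ T ↔ ψ ∈ T :=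
  have ⟨hφψ, hψφ⟩ := isTheory_setOf_ick.and_mem_iff.1 h
  ⟨hT.mem_of_ick_imp hφψ, hT.mem_of_ick_imp hψφ⟩

theorem or_mem_of_mem (hT : IsTheory Γ T) (h : α ∈ T ∨ β ∈ T) : α.or β ∈ T :=
  h.elim (hT.mem_of_ick_imp (ICK.imp_or_left α β)) (hT.mem_of_ick_imp (ICK.imp_or_right α β))

theorem mem_of_or_mem (hT : IsTheory Γ T) (h : α.or β ∈ T) (hα : α.imp γ ∈ T)
    (hβ : β.imp γ ∈ T) : γ ∈ T :=
  hT.mp_mem (hT.mp_mem (hT.mem_of_ick_imp (ICK.or_imp_elim α β γ) hα) hβ) h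

theorem mem_of_bot_mem (hT : IsTheory Γ T) (h : CForm.bot ∈ T) : α ∈ T :=
  hT.mem_of_ick_imp (ICK.bot_imp α) h

protected theorem adjoin (hT : IsTheory Γ T) (α : CForm) : IsTheory Γ (adjoin T α) where
  mem_of_ick _ h := hT.imp_mem_of_mem (hT.mem_of_ick h)
  mp_mem _ _ himp h := hT.mp_mem (hT.mem_of_ick_imp (ICK.imp_distrib α _ _) himp) h

theorem adjoin_subset_iff (hT : IsTheory Γ T) (hS : IsTheory Γ S) :
    adjoin T α ⊆ S ↔ T ⊆ S ∧ α ∈ S :=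
  ⟨fun h => ⟨fun _ hβ => h (hT.imp_mem_of_mem hβ), h (hT.mem_of_ick (ICK.imp_self α))⟩,
    fun h _ hβ => hS.mp_mem (h.1 hβ) h.2⟩

theorem cond_and_mem_iff (hT : IsTheory Γ T) :
    α.cond (β.and γ) ∈ T ↔ α.cond β ∈ T ∧ α.cond γ ∈ T :=
  (hT.mem_iff_of_ick_cIff (ICK.cond_and α β γ)).trans hT.and_mem_iff

theorem cond_mem_of_ick_imp (hT : IsTheory Γ T) (h : ICK Γ (φ.imp ψ)) (hφ : α.cond φ ∈ T) :
    α.cond ψ ∈ T := by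
  -- The congruence rule gives monotonicity because `φ → ψ` makes `φ` equivalent to `φ ∧ ψ`.
  have hiff : ICK Γ (cIff φ (φ.and ψ)) :=
    isTheory_setOf_ick.and_mem_iff.2
      ⟨isTheory_setOf_ick.imp_and_mem (ICK.imp_self φ) h, ICK.and_imp_left φ ψ⟩
  exact (hT.cond_and_mem_iff.1 ((hT.mem_iff_of_ick_cIff hiff.congR).1 hφ)).2

theorem cond_mem_of_ick (hT : IsTheory Γ T) (h : ICK Γ β) : α.cond β ∈ T :=
  hT.cond_mem_of_ick_imp (isTheory_setOf_ick.imp_mem_of_mem h)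
    ((hT.mem_iff_of_ick_cIff (ICK.cond_cTop α)).2 (hT.mem_of_ick (ICK.imp_self CForm.bot)))

protected theorem consequents (hT : IsTheory Γ T) (α : CForm) :
    IsTheory Γ (consequents T α) where
  mem_of_ick _ := hT.cond_mem_of_ick
  mp_mem φ ψ himp h := by
    have hmp : ICK Γ (((φ.imp ψ).and φ).imp ψ) :=
      (isTheory_setOf_ick.adjoin _).mp_mem (ICK.and_imp_left _ _) (ICK.and_imp_right _ _)
    exact hT.cond_mem_of_ick_imp hmp (hT.cond_and_mem_iff.2 ⟨himp, h⟩)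

theorem sUnion {c : Set (Set CForm)} (hne : c.Nonempty) (hchain : IsChain (· ⊆ ·) c)
    (hc : ∀ T ∈ c, IsTheory Γ T) : IsTheory Γ (⋃₀ c) where
  mem_of_ick _ h := hne.elim fun T hT => ⟨T, hT, (hc T hT).mem_of_ick h⟩
  mp_mem := by
    rintro φ ψ ⟨S, hS, himp⟩ ⟨T, hT, hφ⟩
    obtain ⟨U, hU, hSU, hTU⟩ := hchain.directedOn S hS T hT
    exact ⟨U, hU, (hc U hU).mp_mem (hSU himp) (hTU hφ)⟩

end IsTheory

/-- A prime theory: a consistent theory with the disjunction property. Prime theories are the worlds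
of the canonical frame. -/
structure IsPrimeTheory (Γ T : Set CForm) : Prop extends IsTheory Γ T where
  bot_notMem : CForm.bot ∉ T
  mem_or_mem : ∀ ⦃φ ψ⦄, φ.or ψ ∈ T → φ ∈ T ∨ ψ ∈ T

theorem IsPrimeTheory.or_mem_iff (hT : IsPrimeTheory Γ T) : α.or β ∈ T ↔ α ∈ T ∨ β ∈ T :=
  ⟨fun h => hT.mem_or_mem h, hT.or_mem_of_mem⟩

theorem isPrimeTheory_of_maximal (hT : Maximal (fun S => IsTheory Γ S ∧ φ ∉ S) T) :
    IsPrimeTheory Γ T := by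
  obtain ⟨hth, hφ⟩ := hT.prop
  have imp_mem : ∀ α ∉ T, α.imp φ ∈ T := by
    intro α hα
    by_contra hαφ
    obtain ⟨hle, hmem⟩ := (hth.adjoin_subset_iff (hth.adjoin α)).1 subset_rfl
    exact hα (hT.le_of_ge ⟨hth.adjoin α, hαφ⟩ hle hmem)
  refine ⟨hth, fun hbot => hφ (hth.mem_of_bot_mem hbot), fun α β hor => ?_⟩
  by_contra! hαβ
  exact hφ (hth.mem_of_or_mem hor (imp_mem α hαβ.1) (imp_mem β hαβ.2))

namespace IsTheory

theorem exists_isPrimeTheory (hT : IsTheory Γ T) (hφ : φ ∉ T) :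
    ∃ S, IsPrimeTheory Γ S ∧ T ⊆ S ∧ φ ∉ S := by
  obtain ⟨S, hTS, hS⟩ := zorn_subset_nonempty {S | IsTheory Γ S ∧ φ ∉ S}
    (fun c hc hchain hne => ⟨⋃₀ c,
      ⟨sUnion hne hchain fun U hU => (hc hU).1, fun ⟨_, hU, hmem⟩ => (hc hU).2 hmem⟩,
      fun _ => Set.subset_sUnion_of_mem⟩) T ⟨hT, hφ⟩
  exact ⟨S, isPrimeTheory_of_maximal hS, hTS, hS.prop.2⟩

theorem mem_iff_forall_isPrimeTheory (hT : IsTheory Γ T) :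
    φ ∈ T ↔ ∀ S, IsPrimeTheory Γ S → T ⊆ S → φ ∈ S := by
  refine ⟨fun h S _ hTS => hTS h, fun h => ?_⟩
  by_contra hφ
  obtain ⟨S, hS, hTS, hφS⟩ := hT.exists_isPrimeTheory hφ
  exact hφS (h S hS hTS)

theorem imp_mem_iff_forall_isPrimeTheory (hT : IsTheory Γ T) :
    α.imp β ∈ T ↔ ∀ S, IsPrimeTheory Γ S → T ⊆ S → α ∈ S → β ∈ S :=
  (hT.adjoin α).mem_iff_forall_isPrimeTheory.trans <| forall₂_congr fun _ hS => by
    rw [hT.adjoin_subset_iff hS.toIsTheory, and_imp]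

end IsTheory

end Theories

/-- The type of prime theories of `ICK ⊕ Γ`, the worlds of the canonical frame. -/
abbrev PrimeTheory (Γ : Set CForm) : Type :=
  {T : Set CForm // IsPrimeTheory Γ T}

/-- The set of prime theories containing `φ`, which is the truth set of `φ` in the canonical
model. -/
def primeTheoriesOf (Γ : Set CForm) (φ : CForm) : Set (PrimeTheory Γ) :=
  {x | φ ∈ x.1}

section Canonical

variable {Γ : Set CForm} {φ ψ : CForm}

theorem primeTheoriesOf_subset_iff :
    primeTheoriesOf Γ φ ⊆ primeTheoriesOf Γ ψ ↔ ICK Γ (φ.imp ψ) := by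
  refine Iff.trans ?_ isTheory_setOf_ick.imp_mem_iff_forall_isPrimeTheory.symm
  exact ⟨fun h S hS _ => @h ⟨S, hS⟩, fun h x => h x.1 x.2 x.2.mem_of_ick⟩

theorem primeTheoriesOf_eq_iff :
    primeTheoriesOf Γ φ = primeTheoriesOf Γ ψ ↔ ICK Γ (cIff φ ψ) :=
  Set.Subset.antisymm_iff.trans <|
    (and_congr primeTheoriesOf_subset_iff primeTheoriesOf_subset_iff).trans
      isTheory_setOf_ick.and_mem_iff.symm

/-- The canonical frame of `ICK ⊕ Γ`: prime theories ordered by inclusion, where `R_a` relates `x`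
to `y` when `a` is the set of prime theories containing some `φ` and `y` contains every `ψ` with
`φ ⊳ ψ ∈ x`. In particular `R_a` is empty when `a` is not of this form. -/
def canonicalFrame (Γ : Set CForm) [Nonempty (PrimeTheory Γ)] : CondFrame where
  X := PrimeTheory Γ
  ne := inferInstance
  le x y := x.1 ⊆ y.1
  le_refl _ := subset_rfl
  le_trans _ _ _ := subset_trans
  R a x y := ∃ φ, primeTheoriesOf Γ φ = a ∧ consequents x.1 φ ⊆ y.1
  coh := by
    rintro _ - x y z hxy ⟨φ, rfl, hyz⟩
    exact ⟨z, ⟨φ, rfl, fun _ hψ => hyz (hxy hψ)⟩, subset_rfl⟩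

variable [Nonempty (PrimeTheory Γ)]

theorem canonicalFrame_R_primeTheoriesOf_iff {x y : PrimeTheory Γ} :
    (canonicalFrame Γ).R (primeTheoriesOf Γ φ) x y ↔ consequents x.1 φ ⊆ y.1 := by
  refine ⟨fun ⟨ψ, hψφ, hy⟩ χ hχ => hy ?_, fun h => ⟨φ, rfl, h⟩⟩
  exact (x.2.mem_iff_of_ick_cIff (primeTheoriesOf_eq_iff.1 hψφ).congL).2 hχ

theorem csat_canonicalFrame_eq_primeTheoriesOf (φ : CForm) :
    csat (canonicalFrame Γ).le (canonicalFrame Γ).R (fun p => primeTheoriesOf Γ (.var p)) φ =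
      primeTheoriesOf Γ φ := by
  induction φ with
  | var p => rfl
  | bot => exact Set.ext fun x => iff_of_false id x.2.bot_notMem
  | and φ ψ ihφ ihψ =>
    simp only [csat, ihφ, ihψ]
    exact Set.ext fun x => x.2.and_mem_iff.symm
  | or φ ψ ihφ ihψ =>
    simp only [csat, ihφ, ihψ]
    exact Set.ext fun x => x.2.or_mem_iff.symm
  | imp φ ψ ihφ ihψ =>
    simp only [csat, ihφ, ihψ]
    exact Set.ext fun x =>
      Subtype.forall.trans x.2.imp_mem_iff_forall_isPrimeTheory.symm
  | cond φ ψ ihφ ihψ =>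
    simp only [csat, ihφ, ihψ]
    exact Set.ext fun x =>
      (forall_congr' fun _ => imp_congr_left canonicalFrame_R_primeTheoriesOf_iff).trans <|
        Subtype.forall.trans (x.2.consequents φ).mem_iff_forall_isPrimeTheory.symm

theorem ick_of_canonicalFrame_valid (h : (canonicalFrame Γ).valid φ) : ICK Γ φ := by
  refine isTheory_setOf_ick.mem_iff_forall_isPrimeTheory.2 fun S hS _ => ?_
  have hmem := h (fun p => primeTheoriesOf Γ (.var p)) (fun _ _ _ hxy hx => hxy hx) ⟨S, hS⟩
  rwa [csat_canonicalFrame_eq_primeTheoriesOf] at hmem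

theorem mem_of_canonicalFrame_R (hΓ : axId ∈ Γ) {a : Set (PrimeTheory Γ)}
    {x y : PrimeTheory Γ} (hxy : (canonicalFrame Γ).R a x y) : y ∈ a := by
  obtain ⟨φ, rfl, hy⟩ := hxy
  have hid : ICK Γ (φ.cond φ) := (ICK.prem hΓ).subst fun _ => φ
  exact hy (x.2.mem_of_ick hid)

end Canonical

theorem ick_iff_forall_valid_of_canonical {Γ : Set CForm} {C : CondFrame → Prop}
    (sound : ∀ F, C F → ∀ ψ ∈ Γ, F.valid ψ)
    (canonical : ∀ [Nonempty (PrimeTheory Γ)], C (canonicalFrame Γ)) (φ : CForm) :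
    ICK Γ φ ↔ ∀ F, C F → F.valid φ := by
  refine ⟨fun h F hF => CondFrame.valid_of_ick (sound F hF) h, fun h => ?_⟩
  -- If `ICK Γ` is inconsistent there are no prime theories, hence no canonical frame; this step
  -- supplies one when there is something to show.
  refine isTheory_setOf_ick.mem_iff_forall_isPrimeTheory.2 fun S hS hsub => ?_
  have : Nonempty (PrimeTheory Γ) := ⟨⟨S, hS⟩⟩
  exact hsub (ick_of_canonicalFrame_valid (h _ canonical))

/-- `ICK ⊕ (p ⊳ p)` is sound and complete with respect to
conditional Kripke frames satisfying `R_a[x] ⊆ a` for all worlds `x` and all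
upsets `a`. -/
theorem id_completeness (φ : CForm) :
    ICK {axId} φ ↔
      ∀ F : CondFrame,
        (∀ (x : F.X) (a : Set F.X), IsUpset F.le a →
          ∀ y, F.R a x y → y ∈ a) →
        F.valid φ := by
  refine ick_iff_forall_valid_of_canonical (fun F hF ψ hψ => ?_) ?_ φ
  · obtain rfl : ψ = axId := hψ
    exact CondFrame.valid_axId_iff.2 hF
  · exact fun _ _ _ _ hxy => mem_of_canonicalFrame_R (Set.mem_singleton axId) hxy
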